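/- arXiv:1401.0500 — 2 statements merged into one kernel-verified Lean document; each statement's English description precedes it below -/
import Mathlib

section
/- There exists a finite matroid M such that M satisfies the n-th Kinser inequality for every integer n ≥ 4 and every family of n subsets of its ground set, but M is not representable over any field. Consequently, the class of representable matroids is properly contained in K_∞ = ⋂_{n≥4} K_n. -/
open Finset

universe u v

namespace Matroid

variable {α : Type*}

/-- The rank of a set in a matroid: the cardinality of a largest independent subset. -/
noncomputable def rnk (M : Matroid α) (X : Set α) : ℕ :=
  sSup {n : ℕ | ∃ I, M.Indep I ∧ I ⊆ X ∧ I.ncard = n}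

/-- The `n`-th Kinser inequality for the family `X 1, …, X n`. -/
def KinserIneq (M : Matroid α) (n : ℕ) (X : ℕ → Set α) : Prop :=
  (∑ i ∈ Finset.Icc 3 n, M.rnk (X i)) + M.rnk (X 1 ∪ X 2) + M.rnk (X 1 ∪ X 3 ∪ X n)
      + ∑ i ∈ Finset.Icc 4 n, M.rnk (X 2 ∪ X (i - 1) ∪ X i)
    ≤ M.rnk (X 1 ∪ X 3) + M.rnk (X 1 ∪ X n)
      + (∑ i ∈ Finset.Icc 3 n, M.rnk (X 2 ∪ X i))
      + ∑ i ∈ Finset.Icc 4 n, M.rnk (X (i - 1) ∪ X i)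

/-- `M` lies in the Kinser class `K n`: the `n`-th Kinser inequality holds for every
family of `n` subsets of the ground set. -/
def MemKinserClass (M : Matroid α) (n : ℕ) : Prop :=
  ∀ X : ℕ → Set α, (∀ i ∈ Finset.Icc 1 n, X i ⊆ M.E) → M.KinserIneq n X

/-- `M` is (isomorphic to) the matroid of linear dependence of a family of vectors of a
vector space over `𝔽`. -/
def IsRepOver {α : Type u} (M : Matroid α) (𝔽 : Type v) [Field 𝔽] : Prop :=
  ∃ (W : Type (max u v)) (_ : AddCommGroup W) (_ : Module 𝔽 W) (φ : α → W),
    ∀ I : Set α, M.Indep I ↔ I ⊆ M.E ∧ LinearIndependent 𝔽 (fun x : I => φ x.1)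

/-- Deletion of a set of elements from a matroid. -/
def del (M : Matroid α) (D : Set α) : Matroid α := M ↾ (M.E \ D)

/-- Contraction of a set of elements in a matroid. -/
def con (M : Matroid α) (C : Set α) : Matroid α := (M✶ ↾ (M✶.E \ C))✶

/-- `N` is a minor of `M`: it is obtained from `M` by contractions and deletions. -/
def IsMinorOf (N M : Matroid α) : Prop :=
  ∃ C D : Set α, C ⊆ M.E ∧ D ⊆ M.E ∧ Disjoint C D ∧ N = (M.con C).del D

/-- `N` is a proper minor of `M`: at least one element is deleted or contracted. -/
def IsProperMinorOf (N M : Matroid α) : Prop :=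
  ∃ C D : Set α, C ⊆ M.E ∧ D ⊆ M.E ∧ Disjoint C D ∧ (C ∪ D).Nonempty ∧
    N = (M.con C).del D

/-- A matroid isomorphism: a bijection of ground sets preserving independence. -/
def IsIsoTo {β : Type*} (M : Matroid α) (N : Matroid β) : Prop :=
  ∃ f : α → β, Set.BijOn f M.E N.E ∧ ∀ I ⊆ M.E, (M.Indep I ↔ N.Indep (f '' I))

/-- The Ingleton inequality (the 4th Kinser inequality) for four subsets. -/
def IngletonIneq (M : Matroid α) (X₁ X₂ X₃ X₄ : Set α) : Prop :=
  M.rnk X₃ + M.rnk X₄ + M.rnk (X₁ ∪ X₂) + M.rnk (X₁ ∪ X₃ ∪ X₄) + M.rnk (X₂ ∪ X₃ ∪ X₄)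
    ≤ M.rnk (X₁ ∪ X₃) + M.rnk (X₁ ∪ X₄) + M.rnk (X₂ ∪ X₃) + M.rnk (X₂ ∪ X₄)
      + M.rnk (X₃ ∪ X₄)

end Matroid

/-!
If `X 2` and `X n` are subspaces and `C = X 2 ⊓ X n`, then `X 2 ⊔ X n` and `C` satisfy the modular
law exactly. Submodularity lets us trade `X 2` for the smaller `C` along the chain `X 3, …, X n`,
and these trades telescope to the `n`-th Kinser inequality. Hence representable matroids satisfy
it. The rank function of a direct sum is the sum of the rank functions, so the Kinser inequalities
pass to direct sums, even when the summands are representable only over different fields.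

Among the seven nonzero `0/1`-vectors of `K³`, the unit vectors and their sum form a projective
frame, and the other three are the intersections of the lines spanned by opposite pairs of it. A
representation over `F` of their matroid over `K` is therefore, up to scaling and an injective
linear map, the same configuration over `F`. The three pairwise sums of unit vectors have
determinant `-2`, so the matroid tells whether the characteristic is two. The direct sum of the
matroids for `ZMod 2` (Fano) and `ZMod 3` (non-Fano) is thus representable over no field.
-/

namespace Matroid

section Kinser

open Module

variable {K V : Type*} [DivisionRing K] [AddCommGroup V] [Module K V]

theorem finrank_add_finrank_le_of_le_sup_of_le_inf {A B C D : Submodule K V}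
    [FiniteDimensional K A] [FiniteDimensional K B] (hC : C ≤ A ⊔ B) (hD : D ≤ A ⊓ B) :
    finrank K C + finrank K D ≤ finrank K A + finrank K B := by
  rw [← Submodule.finrank_sup_add_finrank_inf_eq A B]
  exact add_le_add (Submodule.finrank_mono hC) (Submodule.finrank_mono hD)

theorem finrank_exchange_le {A B C D : Submodule K V} [FiniteDimensional K A]
    [FiniteDimensional K B] [FiniteDimensional K D] (hCA : C ≤ A) :
    finrank K ↥(A ⊔ B ⊔ D) + finrank K ↥(C ⊔ B) + finrank K D ≤
      finrank K ↥(A ⊔ B) + finrank K ↥(C ⊔ D) + finrank K ↥(B ⊔ D) := by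
  have : FiniteDimensional K C := Submodule.finiteDimensional_of_le hCA
  have hAB : finrank K ↥(A ⊔ B ⊔ D) + finrank K ↥(C ⊔ B) ≤
      finrank K ↥(A ⊔ B) + finrank K ↥(C ⊔ B ⊔ D) :=
    finrank_add_finrank_le_of_le_sup_of_le_inf (by order) (by order)
  have hD : finrank K ↥(C ⊔ B ⊔ D) + finrank K D ≤ finrank K ↥(C ⊔ D) + finrank K ↥(B ⊔ D) :=
    finrank_add_finrank_le_of_le_sup_of_le_inf (by order) (by order)
  lia

theorem sum_finrank_exchange_le {A C : Submodule K V} {X : ℕ → Submodule K V}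
    [FiniteDimensional K A] [∀ i, FiniteDimensional K (X i)] (hCA : C ≤ A) {n : ℕ} (hn : 3 ≤ n) :
    finrank K ↥(C ⊔ X 3) + (∑ i ∈ Icc 3 n, finrank K (X i)) + finrank K ↥(A ⊔ X n)
        + ∑ i ∈ Icc 4 n, finrank K ↥(A ⊔ X (i - 1) ⊔ X i)
      ≤ finrank K (X 3) + finrank K ↥(C ⊔ X n) + (∑ i ∈ Icc 3 n, finrank K ↥(A ⊔ X i))
        + ∑ i ∈ Icc 4 n, finrank K ↥(X (i - 1) ⊔ X i) := by
  induction n, hn using Nat.le_induction with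
  | base => simp only [Icc_self, sum_singleton, Icc_eq_empty_of_lt (by lia : 3 < 4), sum_empty]; lia
  | succ n hn ih =>
    have hexchange := finrank_exchange_le (B := X n) (D := X (n + 1)) hCA
    rw [sum_Icc_succ_top (by lia), sum_Icc_succ_top (by lia), sum_Icc_succ_top (by lia),
      sum_Icc_succ_top (by lia), Nat.add_sub_cancel]
    lia

theorem kinser_finrank_le (X : ℕ → Submodule K V) [∀ i, FiniteDimensional K (X i)] {n : ℕ}
    (hn : 3 ≤ n) :
    (∑ i ∈ Icc 3 n, finrank K (X i)) + finrank K ↥(X 1 ⊔ X 2) + finrank K ↥(X 1 ⊔ X 3 ⊔ X n)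
        + ∑ i ∈ Icc 4 n, finrank K ↥(X 2 ⊔ X (i - 1) ⊔ X i)
      ≤ finrank K ↥(X 1 ⊔ X 3) + finrank K ↥(X 1 ⊔ X n)
        + (∑ i ∈ Icc 3 n, finrank K ↥(X 2 ⊔ X i))
        + ∑ i ∈ Icc 4 n, finrank K ↥(X (i - 1) ⊔ X i) := by
  obtain ⟨C, hC2, hCn, hmodular⟩ : ∃ C ≤ X 2, C ≤ X n ∧
      finrank K ↥(X 2 ⊔ X n) + finrank K C = finrank K (X 2) + finrank K (X n) :=
    ⟨X 2 ⊓ X n, inf_le_left, inf_le_right, Submodule.finrank_sup_add_finrank_inf_eq _ _⟩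
  have : FiniteDimensional K C := Submodule.finiteDimensional_of_le hC2
  have hsum := sum_finrank_exchange_le (X := X) hC2 hn
  rw [sup_eq_right.2 hCn] at hsum
  have h12 : finrank K ↥(X 1 ⊔ X 2) + finrank K C ≤ finrank K (X 2) + finrank K ↥(C ⊔ X 1) :=
    finrank_add_finrank_le_of_le_sup_of_le_inf (by order) (by order)
  have h13n : finrank K ↥(X 1 ⊔ X 3 ⊔ X n) + finrank K ↥(C ⊔ X 1) ≤
      finrank K ↥(X 1 ⊔ X n) + finrank K ↥(C ⊔ X 1 ⊔ X 3) :=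
    finrank_add_finrank_le_of_le_sup_of_le_inf (by order) (by order)
  have h13 : finrank K ↥(C ⊔ X 1 ⊔ X 3) + finrank K (X 3) ≤
      finrank K ↥(C ⊔ X 3) + finrank K ↥(X 1 ⊔ X 3) :=
    finrank_add_finrank_le_of_le_sup_of_le_inf (by order) (by order)
  lia

end Kinser

section Rank

variable {α : Type*} (M : Matroid α) (X : Set α)

theorem rnk_eq_toNat_eRk : M.rnk X = (M.eRk X).toNat := by
  obtain ⟨I, hI⟩ := M.exists_isBasis' X
  rw [← hI.encard_eq_eRk]
  obtain hfin | hinf := I.finite_or_infinite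
  · refine IsGreatest.csSup_eq ⟨⟨I, hI.indep, hI.subset, rfl⟩, ?_⟩
    rintro _ ⟨J, hJ, hJX, rfl⟩
    have hJI : J.encard ≤ I.encard := hI.encard_eq_eRk ▸ hJ.encard_le_eRk_of_subset hJX
    exact ENat.toNat_le_toNat hJI hfin.encard_lt_top.ne
  · rw [hinf.encard_eq, ENat.toNat_top]
    refine Nat.sSup_of_not_bddAbove fun ⟨b, hb⟩ ↦ ?_
    obtain ⟨J, hJI, -, hJcard⟩ := hinf.exists_subset_ncard_eq (b + 1)
    have := hb ⟨J, hI.indep.subset hJI, hJI.trans hI.subset, hJcard⟩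
    lia

end Rank

section Sum

variable {α β : Type*}

theorem encard_eq_encard_preimage_inl_add_encard_preimage_inr (X : Set (α ⊕ β)) :
    X.encard = (Sum.inl ⁻¹' X).encard + (Sum.inr ⁻¹' X).encard := by
  conv_lhs => rw [← Set.image_preimage_inl_union_image_preimage_inr X]
  rw [Set.encard_union_eq, Sum.inl_injective.encard_image, Sum.inr_injective.encard_image]
  exact Set.isCompl_range_inl_range_inr.disjoint.mono (Set.image_subset_range _ _)
    (Set.image_subset_range _ _)

variable (M : Matroid α) (N : Matroid β)

theorem eRk_sum (X : Set (α ⊕ β)) :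
    (M.sum N).eRk X = M.eRk (Sum.inl ⁻¹' X) + N.eRk (Sum.inr ⁻¹' X) := by
  obtain ⟨I, hI⟩ := (M.sum N).exists_isBasis' X
  have hMN : M.IsBasis' (Sum.inl ⁻¹' I) (Sum.inl ⁻¹' X) ∧
      N.IsBasis' (Sum.inr ⁻¹' I) (Sum.inr ⁻¹' X) := by
    simpa [isBasis'_iff_isBasis_inter_ground, Set.preimage_inter,
      Set.preimage_image_eq _ Sum.inl_injective,
      Set.preimage_image_eq _ Sum.inr_injective] using hI
  rw [← hI.encard_eq_eRk, ← hMN.1.encard_eq_eRk, ← hMN.2.encard_eq_eRk,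
    encard_eq_encard_preimage_inl_add_encard_preimage_inr]

theorem rnk_sum [M.RankFinite] [N.RankFinite] (X : Set (α ⊕ β)) :
    (M.sum N).rnk X = M.rnk (Sum.inl ⁻¹' X) + N.rnk (Sum.inr ⁻¹' X) := by
  rw [rnk_eq_toNat_eRk, rnk_eq_toNat_eRk, rnk_eq_toNat_eRk, eRk_sum,
    ENat.toNat_add (M.isRkFinite_set _).eRk_lt_top.ne (N.isRkFinite_set _).eRk_lt_top.ne]

variable {M N}

theorem MemKinserClass.sum [M.RankFinite] [N.RankFinite] {n : ℕ} (hM : M.MemKinserClass n)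
    (hN : N.MemKinserClass n) : (M.sum N).MemKinserClass n := by
  intro X hX
  have hXM := hM (fun i ↦ Sum.inl ⁻¹' X i) fun i hi e he ↦ by simpa using hX i hi he
  have hXN := hN (fun i ↦ Sum.inr ⁻¹' X i) fun i hi e he ↦ by simpa using hX i hi he
  simp only [KinserIneq, rnk_sum, Set.preimage_union, sum_add_distrib] at hXM hXN ⊢
  lia

end Sum

section Representation

variable {α β F V W : Type*} [DivisionRing F] [AddCommGroup W] [Module F W]
  {M : Matroid α} {φ : α → W}

theorem linearIndepOn_image_iff {f : β → α} {I : Set β} (hf : Set.InjOn f I) :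
    LinearIndepOn F φ (f '' I) ↔ LinearIndepOn F (φ ∘ f) I :=
  ⟨fun h ↦ h.comp_of_image hf, fun h ↦ h.image_of_comp⟩

/-- The family of vectors `φ` is a linear representation of `M` over `F`: on the ground set, it has
the same independent sets as `M`. -/
def IsRepBy (M : Matroid α) (F : Type*) [DivisionRing F] [Module F W] (φ : α → W) : Prop :=
  ∀ I : Set α, M.Indep I ↔ I ⊆ M.E ∧ LinearIndepOn F φ I

namespace IsRepBy

theorem linearIndepOn (h : M.IsRepBy F φ) {I : Set α} (hI : M.Indep I) : LinearIndepOn F φ I :=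
  ((h I).1 hI).2

theorem mem_closure_iff_of_indep (h : M.IsRepBy F φ) {I : Set α} (hI : M.Indep I) {e : α}
    (he : e ∈ M.E) : e ∈ M.closure I ↔ φ e ∈ Submodule.span F (φ '' I) := by
  rw [hI.mem_closure_iff', (h.linearIndepOn hI).mem_span_iff, h]
  simp [he, Set.insert_subset_iff, hI.subset_ground]

theorem span_image_eq_of_isBasis (h : M.IsRepBy F φ) {I X : Set α} (hI : M.IsBasis I X) :
    Submodule.span F (φ '' I) = Submodule.span F (φ '' X) := by
  refine le_antisymm (Submodule.span_mono (Set.image_mono hI.subset)) (Submodule.span_le.2 ?_)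
  rintro _ ⟨e, he, rfl⟩
  exact (h.mem_closure_iff_of_indep hI.indep (hI.subset_ground he)).1 (hI.subset_closure he)

theorem mem_closure_iff (h : M.IsRepBy F φ) {X : Set α} (hX : X ⊆ M.E) {e : α} (he : e ∈ M.E) :
    e ∈ M.closure X ↔ φ e ∈ Submodule.span F (φ '' X) := by
  obtain ⟨I, hI⟩ := M.exists_isBasis X
  rw [← hI.closure_eq_closure, h.mem_closure_iff_of_indep hI.indep he,
    h.span_image_eq_of_isBasis hI]

theorem rnk_eq_finrank_span (h : M.IsRepBy F φ) (X : Set α) :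
    M.rnk X = Module.finrank F (Submodule.span F (φ '' (X ∩ M.E))) := by
  obtain ⟨I, hI⟩ := M.exists_isBasis' X
  rw [rnk_eq_toNat_eRk, ← hI.encard_eq_eRk, ← toENat_rank_span_set (h.linearIndepOn hI.indep),
    h.span_image_eq_of_isBasis (isBasis'_iff_isBasis_inter_ground.1 hI), Cardinal.toNat_toENat,
    Module.finrank]

theorem finiteDimensional_span [M.RankFinite] (h : M.IsRepBy F φ) {X : Set α} (hX : X ⊆ M.E) :
    FiniteDimensional F (Submodule.span F (φ '' X)) := by
  obtain ⟨I, hI⟩ := M.exists_isBasis X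
  rw [← h.span_image_eq_of_isBasis hI]
  exact FiniteDimensional.span_of_finite F (hI.indep.finite.image φ)

theorem memKinserClass [M.RankFinite] (h : M.IsRepBy F φ) {n : ℕ} (hn : 3 ≤ n) :
    M.MemKinserClass n := by
  intro X _
  have (i : ℕ) : FiniteDimensional F (Submodule.span F (φ '' (X i ∩ M.E))) :=
    h.finiteDimensional_span Set.inter_subset_right
  have hunion (A B : Set α) : M.rnk (A ∪ B) = Module.finrank F
      ↥(Submodule.span F (φ '' (A ∩ M.E)) ⊔ Submodule.span F (φ '' (B ∩ M.E))) := by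
    rw [h.rnk_eq_finrank_span, Set.union_inter_distrib_right, Set.image_union, Submodule.span_union]
  have hunion₃ (A B C : Set α) : M.rnk (A ∪ B ∪ C) = Module.finrank F
      ↥(Submodule.span F (φ '' (A ∩ M.E)) ⊔ Submodule.span F (φ '' (B ∩ M.E)) ⊔
        Submodule.span F (φ '' (C ∩ M.E))) := by
    rw [hunion, Set.union_inter_distrib_right, Set.image_union, Submodule.span_union]
  simp only [KinserIneq, hunion₃, hunion]
  simpa only [h.rnk_eq_finrank_span] using
    kinser_finrank_le (fun i ↦ Submodule.span F (φ '' (X i ∩ M.E))) hn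

theorem mem_span_image_iff_mem_span_image {K : Type*} [DivisionRing K] [AddCommGroup V] [Module K V]
    {ψ : α → V} (h : M.IsRepBy F φ) (hψ : M.IsRepBy K ψ) {X : Set α} (hX : X ⊆ M.E) {e : α}
    (he : e ∈ M.E) :
    φ e ∈ Submodule.span F (φ '' X) ↔ ψ e ∈ Submodule.span K (ψ '' X) := by
  rw [← h.mem_closure_iff hX he, hψ.mem_closure_iff hX he]

theorem comp_inl {N : Matroid β} {φ : α ⊕ β → W} (h : (M.sum N).IsRepBy F φ) :
    M.IsRepBy F (φ ∘ Sum.inl) := by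
  intro I
  rw [← linearIndepOn_image_iff Sum.inl_injective.injOn]
  simpa [Set.preimage_image_eq _ Sum.inl_injective] using h (Sum.inl '' I)

theorem comp_inr {N : Matroid β} {φ : α ⊕ β → W} (h : (M.sum N).IsRepBy F φ) :
    N.IsRepBy F (φ ∘ Sum.inr) := by
  intro I
  rw [← linearIndepOn_image_iff Sum.inr_injective.injOn]
  simpa [Set.preimage_image_eq _ Sum.inr_injective] using h (Sum.inr '' I)

end IsRepBy

end Representation

section LinearMatroid

variable {ι K V W : Type*} [DivisionRing K] [AddCommGroup V] [Module K V]
  [AddCommGroup W] [Module K W]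

theorem encard_le_encard_of_image_subset_span {v : ι → V} {I J : Set ι}
    (hI : LinearIndepOn K v I) (hJ : LinearIndepOn K v J)
    (h : v '' J ⊆ Submodule.span K (v '' I)) : J.encard ≤ I.encard := by
  rw [← toENat_rank_span_set hI, ← toENat_rank_span_set hJ]
  exact OrderHomClass.mono Cardinal.toENat (Submodule.rank_mono (Submodule.span_le.2 h))

theorem exists_linearIndepOn_insert_of_encard_lt {v : ι → V} {I J : Set ι}
    (hI : LinearIndepOn K v I) (hJ : LinearIndepOn K v J) (h : I.encard < J.encard) :
    ∃ e ∈ J, e ∉ I ∧ LinearIndepOn K v (insert e I) := by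
  contrapose! h
  refine encard_le_encard_of_image_subset_span hI hJ ?_
  rintro _ ⟨e, he, rfl⟩
  exact hI.mem_span_iff.2 fun hins ↦ by_contra fun heI ↦ h e he heI hins

/-- The matroid of linear dependence of the family of vectors `v`, on the whole index type. -/
def linearMatroid (K : Type*) [DivisionRing K] [Module K V] (v : ι → V) : Matroid ι :=
  (IndepMatroid.ofFinitaryCardAugment Set.univ (LinearIndepOn K v) (linearIndepOn_empty K v)
    (fun _ _ hJ hIJ ↦ hJ.mono hIJ)
    (fun I J hI hIfin hJ hJfin hIJ ↦ exists_linearIndepOn_insert_of_encard_lt hI hJ <| by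
      rwa [← hIfin.cast_ncard_eq, ← hJfin.cast_ncard_eq, Nat.cast_lt])
    (fun I hI ↦ linearIndepOn_of_finite I hI) (fun _ _ ↦ Set.subset_univ _)).matroid

@[simp]
theorem linearMatroid_ground (v : ι → V) : (linearMatroid K v).E = Set.univ := rfl

@[simp]
theorem linearMatroid_indep_iff {v : ι → V} {I : Set ι} :
    (linearMatroid K v).Indep I ↔ LinearIndepOn K v I := by
  simp [linearMatroid, IndepMatroid.ofFinitaryCardAugment]

instance [Finite ι] (v : ι → V) : (linearMatroid K v).Finite := ⟨Set.toFinite _⟩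

theorem isRepBy_linearMatroid (v : ι → V) : (linearMatroid K v).IsRepBy K v := by
  simp [IsRepBy]

theorem IsRepBy.eq_linearMatroid {M : Matroid ι} {v : ι → V} (h : M.IsRepBy K v)
    (hE : M.E = Set.univ) : M = linearMatroid K v :=
  ext_indep hE fun I _ ↦ by simp [h I, hE]

theorem linearMatroid_units_smul (c : ι → Kˣ) (v : ι → V) :
    linearMatroid K (c • v) = linearMatroid K v :=
  ext_indep rfl fun I _ ↦ by
    rw [linearMatroid_indep_iff, linearMatroid_indep_iff]
    exact LinearIndependent.units_smul_iff _ _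

theorem linearMatroid_linearMap_comp {f : V →ₗ[K] W} (hf : Function.Injective f) (v : ι → V) :
    linearMatroid K (f ∘ v) = linearMatroid K v :=
  ext_indep rfl fun I _ ↦ by simpa using f.linearIndepOn_iff_of_injOn hf.injOn

end LinearMatroid

section Triple

theorem comp_vec_three {α β : Type*} (f : α → β) (x y z : α) :
    f ∘ ![x, y, z] = ![f x, f y, f z] :=
  (FinVec.map_eq f ![x, y, z]).symm

theorem exists_units_smul_eq_of_mem_span_pair {F W : Type*} [Field F] [AddCommGroup W]
    [Module F W] {x y z w : W} {a b c : F} (hxyz : LinearIndependent F ![x, y, z]) (hw : w ≠ 0)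
    (hxy : w ∈ Submodule.span F {x, y})
    (hz : w ∈ Submodule.span F {z, a • x + b • y + c • z}) :
    ∃ t : Fˣ, w = t • (a • x + b • y) := by
  obtain ⟨p, q, rfl⟩ := Submodule.mem_span_pair.1 hxy
  obtain ⟨r, s, hrs⟩ := Submodule.mem_span_pair.1 hz
  have hzero : (s * a - p) • x + (s * b - q) • y + (r + s * c) • z = 0 := by
    linear_combination (norm := module) hrs
  have hcoeff := Fintype.linearIndependent_iff.1 hxyz ![s * a - p, s * b - q, r + s * c]
    (by simpa [Fin.sum_univ_three] using hzero)
  have hp : s * a - p = 0 := hcoeff 0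
  have hq : s * b - q = 0 := hcoeff 1
  have hpq : p • x + q • y = s • (a • x + b • y) := by
    rw [← sub_eq_zero.1 hp, ← sub_eq_zero.1 hq]
    module
  have hs : s ≠ 0 := by
    rintro rfl
    exact hw (by simpa using hpq)
  exact ⟨.mk0 s hs, hpq⟩

end Triple

section Fano

/-- The seven nonzero `0/1`-vectors of length three. The indices `0, 1, 2` are the unit vectors,
`3, 4, 5` their pairwise sums and `6` the sum of all three. -/
def fanoVec (R : Type*) [Zero R] [One R] : Fin 7 → Fin 3 → R :=
  ![![1, 0, 0], ![0, 1, 0], ![0, 0, 1], ![1, 1, 0], ![1, 0, 1], ![0, 1, 1], ![1, 1, 1]]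

/-- The Fano matroid if `K` has characteristic two, and the non-Fano matroid otherwise: the
characteristic decides whether `{3, 4, 5}` is a line. -/
abbrev fanoMatroid (K : Type*) [Field K] : Matroid (Fin 7) := linearMatroid K (fanoVec K)

variable {K F W : Type*} [Field K] [Field F] [AddCommGroup W] [Module F W] {ψ : Fin 7 → W}

theorem fanoMatroid_indep_range_iff {f : Fin 3 → Fin 7} (hf : Function.Injective f) :
    (fanoMatroid K).Indep (Set.range f) ↔ (Matrix.of (fanoVec K ∘ f)).det ≠ 0 := by
  rw [linearMatroid_indep_iff, linearIndepOn_range_iff hf, ← isUnit_iff_ne_zero,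
    ← Matrix.isUnit_iff_isUnit_det, ← Matrix.linearIndependent_rows_iff_isUnit]
  rfl

theorem fanoMatroid_indep_range_zero_one_two : (fanoMatroid K).Indep (Set.range ![0, 1, 2]) := by
  rw [fanoMatroid_indep_range_iff (by decide)]
  simp [Matrix.det_fin_three, fanoVec]

theorem fanoMatroid_indep_range_three_four_five_iff :
    (fanoMatroid K).Indep (Set.range ![3, 4, 5]) ↔ (2 : K) ≠ 0 := by
  rw [fanoMatroid_indep_range_iff (by decide)]
  have hdet : (Matrix.of (fanoVec K ∘ ![3, 4, 5])).det = -1 - 1 := by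
    simp [Matrix.det_fin_three, fanoVec]
  rw [hdet, ← neg_add', one_add_one_eq_two, neg_ne_zero]

theorem mem_span_pair_iff_fanoVec_mem_span_pair (hψ : (fanoMatroid K).IsRepBy F ψ)
    (i j k : Fin 7) : ψ k ∈ Submodule.span F {ψ i, ψ j} ↔
      fanoVec K k ∈ Submodule.span K {fanoVec K i, fanoVec K j} := by
  simpa [Set.image_pair] using hψ.mem_span_image_iff_mem_span_image
    (isRepBy_linearMatroid (fanoVec K)) (Set.subset_univ {i, j}) (Set.mem_univ k)

theorem ne_zero_of_isRepBy_fanoMatroid (hψ : (fanoMatroid K).IsRepBy F ψ) (i : Fin 7) :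
    ψ i ≠ 0 := by
  have hi : (fanoMatroid K).Indep {i} := by
    rw [linearMatroid_indep_iff, linearIndepOn_singleton_iff]
    fin_cases i <;> simp [fanoVec]
  simpa using hψ.linearIndepOn hi

theorem linearIndependent_of_isRepBy_fanoMatroid (hψ : (fanoMatroid K).IsRepBy F ψ) :
    LinearIndependent F ![ψ 0, ψ 1, ψ 2] := by
  have h := hψ.linearIndepOn fanoMatroid_indep_range_zero_one_two
  rwa [linearIndepOn_range_iff (by decide), comp_vec_three] at h

theorem exists_units_smul_add_of_isRepBy_fanoMatroid (hψ : (fanoMatroid K).IsRepBy F ψ) :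
    ∃ a b c : Fˣ, ψ 6 = a • ψ 0 + b • ψ 1 + c • ψ 2 := by
  have hspan : ψ 6 ∈ Submodule.span F {ψ 0, ψ 1, ψ 2} := by
    have h := (hψ.mem_span_image_iff_mem_span_image (isRepBy_linearMatroid (fanoVec K))
      (Set.subset_univ {0, 1, 2}) (Set.mem_univ 6)).2
    simp only [Set.image_insert_eq, Set.image_singleton] at h
    exact h (Submodule.mem_span_triple.2 ⟨1, 1, 1, by simp [fanoVec]⟩)
  obtain ⟨a, b, c, habc⟩ := Submodule.mem_span_triple.1 hspan
  have ha : a ≠ 0 := by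
    rintro rfl
    have h := (mem_span_pair_iff_fanoVec_mem_span_pair hψ 1 2 6).1
      (Submodule.mem_span_pair.2 ⟨b, c, by simpa using habc⟩)
    simp [Submodule.mem_span_pair, fanoVec] at h
  have hb : b ≠ 0 := by
    rintro rfl
    have h := (mem_span_pair_iff_fanoVec_mem_span_pair hψ 0 2 6).1
      (Submodule.mem_span_pair.2 ⟨a, c, by simpa using habc⟩)
    simp [Submodule.mem_span_pair, fanoVec] at h
  have hc : c ≠ 0 := by
    rintro rfl
    have h := (mem_span_pair_iff_fanoVec_mem_span_pair hψ 0 1 6).1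
      (Submodule.mem_span_pair.2 ⟨a, b, by simpa using habc⟩)
    simp [Submodule.mem_span_pair, fanoVec] at h
  exact ⟨.mk0 a ha, .mk0 b hb, .mk0 c hc, habc.symm⟩

theorem exists_units_smul_eq_of_isRepBy_fanoMatroid (hψ : (fanoMatroid K).IsRepBy F ψ)
    {i j k l : Fin 7} {a b c : Fˣ} (hind : LinearIndependent F ![ψ i, ψ j, ψ k])
    (h6 : ψ 6 = a • ψ i + b • ψ j + c • ψ k) (hij : fanoVec K l = fanoVec K i + fanoVec K j)
    (hk : fanoVec K l = fanoVec K 6 - fanoVec K k) : ∃ t : Fˣ, ψ l = t • (a • ψ i + b • ψ j) := by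
  refine exists_units_smul_eq_of_mem_span_pair (a := (a : F)) (b := b) (c := c) hind
    (ne_zero_of_isRepBy_fanoMatroid hψ l) ?_ ?_
  · rw [mem_span_pair_iff_fanoVec_mem_span_pair hψ]
    exact Submodule.mem_span_pair.2 ⟨1, 1, by simp [hij]⟩
  · change ψ l ∈ Submodule.span F {ψ k, a • ψ i + b • ψ j + c • ψ k}
    rw [← h6, mem_span_pair_iff_fanoVec_mem_span_pair hψ]
    exact Submodule.mem_span_pair.2 ⟨-1, 1, by rw [hk]; module⟩

theorem exists_eq_units_smul_linearCombination_fanoVec (hψ : (fanoMatroid K).IsRepBy F ψ) :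
    ∃ (u : Fin 3 → W) (t : Fin 7 → Fˣ), LinearIndependent F u ∧
      ψ = t • (Fintype.linearCombination F u ∘ fanoVec F) := by
  obtain ⟨a, b, c, h6⟩ := exists_units_smul_add_of_isRepBy_fanoMatroid hψ
  have h012 := linearIndependent_of_isRepBy_fanoMatroid hψ
  have h021 : LinearIndependent F ![ψ 0, ψ 2, ψ 1] := by
    simpa [comp_vec_three] using h012.comp ![0, 2, 1] (by decide)
  have h120 : LinearIndependent F ![ψ 1, ψ 2, ψ 0] := by
    simpa [comp_vec_three] using h012.comp ![1, 2, 0] (by decide)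
  obtain ⟨t₃, h3⟩ := exists_units_smul_eq_of_isRepBy_fanoMatroid (l := 3) hψ h012 h6
    (by simp [fanoVec]) (by simp [fanoVec])
  obtain ⟨t₄, h4⟩ := exists_units_smul_eq_of_isRepBy_fanoMatroid (l := 4) hψ h021
    (h6.trans (add_right_comm _ _ _)) (by simp [fanoVec]) (by simp [fanoVec])
  obtain ⟨t₅, h5⟩ := exists_units_smul_eq_of_isRepBy_fanoMatroid (l := 5) hψ h120
    (h6.trans (add_rotate _ _ _)) (by simp [fanoVec]) (by simp [fanoVec])
  refine ⟨![a • ψ 0, b • ψ 1, c • ψ 2], ![a⁻¹, b⁻¹, c⁻¹, t₃, t₄, t₅, 1], ?_, ?_⟩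
  · convert h012.units_smul ![a, b, c] using 1
    ext i
    fin_cases i <;> rfl
  · ext i
    fin_cases i <;>
      simp [fanoVec, Fintype.linearCombination_apply, Fin.sum_univ_three, h3, h4, h5, h6]

theorem fanoMatroid_eq_of_isRepBy (hψ : (fanoMatroid K).IsRepBy F ψ) :
    fanoMatroid F = fanoMatroid K := by
  obtain ⟨u, t, hu, rfl⟩ := exists_eq_units_smul_linearCombination_fanoVec hψ
  rw [hψ.eq_linearMatroid rfl, linearMatroid_units_smul,
    linearMatroid_linearMap_comp hu.fintypeLinearCombination_injective]

theorem two_ne_zero_iff_of_isRepBy_fanoMatroid (hψ : (fanoMatroid K).IsRepBy F ψ) :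
    (2 : F) ≠ 0 ↔ (2 : K) ≠ 0 := by
  rw [← fanoMatroid_indep_range_three_four_five_iff, fanoMatroid_eq_of_isRepBy hψ,
    fanoMatroid_indep_range_three_four_five_iff]

end Fano

end Matroid

/-- There is a finite matroid satisfying every Kinser inequality which is not
representable over any field: the representable matroids are properly contained in
`K_∞ = ⋂_{n ≥ 4} K_n`. -/
theorem Matroid.exists_memKinserClass_forall_not_isRepOver :
    ∃ (α : Type) (M : Matroid α), M.Finite ∧ (∀ n : ℕ, 4 ≤ n → M.MemKinserClass n) ∧
      ∀ (𝔽 : Type) (_ : Field 𝔽), ¬ M.IsRepOver 𝔽 := by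
  refine ⟨Fin 7 ⊕ Fin 7, (fanoMatroid (ZMod 2)).sum (fanoMatroid (ZMod 3)), ⟨Set.toFinite _⟩,
    fun n hn ↦ .sum ?_ ?_, ?_⟩
  · exact (isRepBy_linearMatroid _).memKinserClass (by lia)
  · exact (isRepBy_linearMatroid _).memKinserClass (by lia)
  · rintro F _ ⟨W, _, _, φ, hφ⟩
    have hrep : IsRepBy _ F φ := hφ
    have hFano := two_ne_zero_iff_of_isRepBy_fanoMatroid hrep.comp_inl
    have hnonFano := two_ne_zero_iff_of_isRepBy_fanoMatroid hrep.comp_inr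
    exact absurd (hFano.1 (hnonFano.2 (by decide))) (by decide)
end

section
/- Let M be a finite matroid satisfying the 4th Kinser (Ingleton) inequality for every family of four subsets of its ground set. Then the dual matroid M* also satisfies the 4th Kinser inequality for every family of four subsets of its ground set. Consequently K_4 = K_4*, i.e. the class K_4 is closed under duality. -/
open Finset

universe u v

/-! Since `r*(X) = |X| + r(E \ X) - r(E)`, the Ingleton inequality for `M✶` at `A, B, C, D` is an
inequality between ranks in `M` of intersections of the complements `P, Q, R, S` of these sets,
with the Ingleton slack of the cardinality function as an error term. It follows from the Ingleton
inequality for `M` at the four triple intersections `P ∩ Q ∩ S`, `P ∩ Q ∩ R`, `P ∩ R ∩ S`,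
`Q ∩ R ∩ S`: submodularity inside `S` and inside `R` passes from unions of triple intersections to
pairwise intersections, and each error committed is the rank of a set whose cardinality occurs in
that slack. -/

/-- Submodular functions on a lattice, of which matroid rank functions are the example used here. -/
def IsSubmodular {L β : Type*} [Lattice L] [Add β] [LE β] (f : L → β) : Prop :=
  ∀ x y, f (x ⊓ y) + f (x ⊔ y) ≤ f x + f y

theorem IsSubmodular.sup_add_inf_sup_inf_le {L β : Type*} [DistribLattice L] [AddCommMonoid β]
    [PartialOrder β] [IsOrderedCancelAddMonoid β] {f : L → β} (hf : IsSubmodular f) (x y z : L) :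
    f (x ⊔ y ⊔ z) + f (x ⊓ y ⊔ x ⊓ z) + f (x ⊓ y ⊔ y ⊓ z) + f (x ⊓ z ⊔ y ⊓ z)
      ≤ f x + f y + f z + f (x ⊓ y ⊔ x ⊓ z ⊔ y ⊓ z) := by
  have add_x : f (x ⊓ y ⊔ x ⊓ z) + f (x ⊔ y ⊓ z) ≤ f (x ⊓ y ⊔ x ⊓ z ⊔ y ⊓ z) + f x := by
    have meet : (x ⊓ y ⊔ x ⊓ z ⊔ y ⊓ z) ⊓ x = x ⊓ y ⊔ x ⊓ z := by rw [inf_sup_right]; order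
    have join : x ⊓ y ⊔ x ⊓ z ⊔ y ⊓ z ⊔ x = x ⊔ y ⊓ z := by order
    simpa only [meet, join] using hf (x ⊓ y ⊔ x ⊓ z ⊔ y ⊓ z) x
  have add_y : f (x ⊓ y ⊔ y ⊓ z) + f (x ⊔ y) ≤ f (x ⊔ y ⊓ z) + f y := by
    have meet : (x ⊔ y ⊓ z) ⊓ y = x ⊓ y ⊔ y ⊓ z := by rw [inf_sup_right]; order
    have join : x ⊔ y ⊓ z ⊔ y = x ⊔ y := by order
    simpa only [meet, join] using hf (x ⊔ y ⊓ z) y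
  have add_z : f (x ⊓ z ⊔ y ⊓ z) + f (x ⊔ y ⊔ z) ≤ f (x ⊔ y) + f z := by
    simpa only [inf_sup_right] using hf (x ⊔ y) z
  have total := add_le_add (add_le_add add_x add_y) add_z
  refine le_of_add_le_add_right (a := f (x ⊔ y ⊓ z) + f (x ⊔ y)) ?_
  convert total using 1 <;> abel

namespace Matroid

section Rank

variable {α : Type*} {M : Matroid α} {X : Set α}

theorem cast_rnk_eq_of_isRkFinite (hX : M.IsRkFinite X) : (M.rnk X : ℕ∞) = M.eRk X := by
  obtain ⟨I, hI, hIfin⟩ := hX.exists_finite_isBasis'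
  suffices hrnk : M.rnk X = I.ncard by rw [hrnk, hIfin.cast_ncard_eq, hI.encard_eq_eRk]
  refine IsGreatest.csSup_eq ⟨⟨I, hI.indep, hI.subset, rfl⟩, ?_⟩
  rintro _ ⟨J, hJ, hJX, rfl⟩
  have hJI : J.encard ≤ I.encard := hI.encard_eq_eRk ▸ hJ.encard_le_eRk_of_subset hJX
  exact ENat.toNat_le_toNat hJI hIfin.encard_lt_top.ne

theorem rnk_le_ncard (M : Matroid α) (hX : X.Finite) : M.rnk X ≤ X.ncard := by
  have h := M.eRk_le_encard X
  rw [← cast_rnk_eq_of_isRkFinite (M.isRkFinite_of_finite hX), ← hX.cast_ncard_eq] at h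
  exact_mod_cast h

variable (M) [M.RankFinite]

theorem cast_rnk_eq (X : Set α) : (M.rnk X : ℕ∞) = M.eRk X :=
  cast_rnk_eq_of_isRkFinite (M.isRkFinite_set X)

theorem isSubmodular_rnk : IsSubmodular M.rnk := fun X Y ↦ by
  have h := M.eRk_inter_add_eRk_union_le X Y
  simp only [← cast_rnk_eq] at h
  exact_mod_cast h

theorem rnk_le_rnk_inter_add_rnk_sdiff (X Y : Set α) :
    M.rnk X ≤ M.rnk (X ∩ Y) + M.rnk (X \ Y) := by
  have h := M.eRk_le_eRk_inter_add_eRk_sdiff X Y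
  simp only [← cast_rnk_eq] at h
  exact_mod_cast h

theorem rnk_dual_add_rnk_ground (hX : X ⊆ M.E) (hfin : X.Finite) :
    M✶.rnk X + M.rnk M.E = M.rnk (M.E \ X) + X.ncard := by
  have h := M.eRk_dual_add_eRank X hX
  rw [← M.eRk_ground, ← cast_rnk_eq_of_isRkFinite (M✶.isRkFinite_of_finite hfin),
    ← hfin.cast_ncard_eq] at h
  simp only [← cast_rnk_eq] at h
  exact_mod_cast h

end Rank

section Ingleton

variable {α : Type*} {A B C D : Set α}

theorem ncard_eq_sum_indicator {X : Set α} {U : Finset α} (hX : X ⊆ U) :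
    X.ncard = ∑ x ∈ U, X.indicator 1 x := by
  classical
  lift X to Finset α using U.finite_toSet.subset hX
  rw [Finset.sum_indicator_subset _ (Finset.coe_subset.1 hX), Set.ncard_coe_finset]
  simp

theorem ncard_ingleton_identity (hfin : (A ∪ B ∪ C ∪ D).Finite) :
    C.ncard + D.ncard + (A ∪ B).ncard + (A ∪ C ∪ D).ncard + (B ∪ C ∪ D).ncard
      + ((A ∩ B) \ (C ∪ D)).ncard + ((C ∩ D) \ (A ∪ B)).ncard
      + ((A ∩ B ∩ C) \ D).ncard + ((A ∩ B ∩ D) \ C).ncard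
    = (A ∪ C).ncard + (A ∪ D).ncard + (B ∪ C).ncard + (B ∪ D).ncard + (C ∪ D).ncard := by
  obtain ⟨U, hU⟩ := hfin.exists_finset_coe
  have card {X : Set α} (hX : X ⊆ A ∪ B ∪ C ∪ D) : X.ncard = ∑ x ∈ U, X.indicator 1 x :=
    ncard_eq_sum_indicator (hU ▸ hX)
  iterate 14 rw [card (by grind)]
  simp only [← Finset.sum_add_distrib]
  refine Finset.sum_congr rfl fun x _ ↦ ?_
  by_cases hA : x ∈ A <;> by_cases hB : x ∈ B <;> by_cases hC : x ∈ C <;> by_cases hD : x ∈ D <;>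
    simp [hA, hB, hC, hD]

theorem rnk_add_rnk_union_triple_inter_le (M : Matroid α) [M.RankFinite] (P Q R S : Set α) :
    M.rnk S + M.rnk (P ∩ Q ∩ S ∪ P ∩ R ∩ S) + M.rnk (P ∩ Q ∩ S ∪ Q ∩ R ∩ S)
        + M.rnk (P ∩ R ∩ S ∪ Q ∩ R ∩ S)
      ≤ M.rnk (P ∩ S) + M.rnk (Q ∩ S) + M.rnk (R ∩ S)
        + M.rnk (P ∩ Q ∩ S ∪ P ∩ R ∩ S ∪ Q ∩ R ∩ S) + M.rnk (S \ (P ∪ Q ∪ R)) := by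
  have split := M.rnk_le_rnk_inter_add_rnk_sdiff S (P ∪ Q ∪ R)
  have submod := M.isSubmodular_rnk.sup_add_inf_sup_inf_le (P ∩ S) (Q ∩ S) (R ∩ S)
  rw [Set.inter_comm S] at split
  simp only [Set.inf_eq_inter, Set.sup_eq_union, ← Set.inter_inter_distrib_right,
    ← Set.union_inter_distrib_right] at submod ⊢
  omega

theorem IngletonIneq.rnk_inter_le {M : Matroid α} [M.RankFinite] {P Q R S : Set α}
    (h : M.IngletonIneq (P ∩ Q ∩ S) (P ∩ Q ∩ R) (P ∩ R ∩ S) (Q ∩ R ∩ S)) :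
    M.rnk R + M.rnk S + M.rnk (P ∩ Q) + M.rnk (P ∩ R ∩ S) + M.rnk (Q ∩ R ∩ S)
      ≤ M.rnk (P ∩ R) + M.rnk (P ∩ S) + M.rnk (Q ∩ R) + M.rnk (Q ∩ S) + M.rnk (R ∩ S)
        + M.rnk ((P ∩ Q) \ (R ∪ S)) + M.rnk ((R ∩ S) \ (P ∪ Q))
        + M.rnk (R \ (P ∪ Q ∪ S)) + M.rnk (S \ (P ∪ Q ∪ R)) := by
  have inside_S := M.rnk_add_rnk_union_triple_inter_le P Q R S
  have inside_R := M.rnk_add_rnk_union_triple_inter_le P Q S R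
  have split_PQ : M.rnk (P ∩ Q)
      ≤ M.rnk (P ∩ Q ∩ S ∪ P ∩ Q ∩ R) + M.rnk ((P ∩ Q) \ (R ∪ S)) := by
    convert M.rnk_le_rnk_inter_add_rnk_sdiff (P ∩ Q) (R ∪ S) using 3
    grind
  have split_RS : M.rnk (R ∩ S)
      ≤ M.rnk (P ∩ R ∩ S ∪ Q ∩ R ∩ S) + M.rnk ((R ∩ S) \ (P ∪ Q)) := by
    convert M.rnk_le_rnk_inter_add_rnk_sdiff (R ∩ S) (P ∪ Q) using 3
    grind
  simp only [Set.inter_right_comm _ S R, Set.inter_comm S R] at inside_R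
  unfold IngletonIneq at h
  omega

theorem rnk_sdiff_sdiff_sdiff_le_ncard (M : Matroid α) {X Y : Set α} (hY : Y ⊆ M.E)
    (hfin : Y.Finite) : M.rnk ((M.E \ X) \ (M.E \ Y)) ≤ (Y \ X).ncard := by
  rw [show (M.E \ X) \ (M.E \ Y) = Y \ X by grind]
  exact M.rnk_le_ncard hfin.sdiff

theorem ingletonIneq_dual_iff (M : Matroid α) [M.RankFinite] (hE : A ∪ B ∪ C ∪ D ⊆ M.E)
    (hfin : (A ∪ B ∪ C ∪ D).Finite) :
    M✶.IngletonIneq A B C D ↔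
      M.rnk (M.E \ C) + M.rnk (M.E \ D) + M.rnk (M.E \ (A ∪ B)) + M.rnk (M.E \ (A ∪ C ∪ D))
          + M.rnk (M.E \ (B ∪ C ∪ D))
        ≤ M.rnk (M.E \ (A ∪ C)) + M.rnk (M.E \ (A ∪ D)) + M.rnk (M.E \ (B ∪ C))
          + M.rnk (M.E \ (B ∪ D)) + M.rnk (M.E \ (C ∪ D))
          + ((A ∩ B) \ (C ∪ D)).ncard + ((C ∩ D) \ (A ∪ B)).ncard
          + ((A ∩ B ∩ D) \ C).ncard + ((A ∩ B ∩ C) \ D).ncard := by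
  have rank_C := M.rnk_dual_add_rnk_ground (X := C) (by grind) (hfin.subset (by grind))
  have rank_D := M.rnk_dual_add_rnk_ground (X := D) (by grind) (hfin.subset (by grind))
  have rank_AB := M.rnk_dual_add_rnk_ground (X := A ∪ B) (by grind) (hfin.subset (by grind))
  have rank_AC := M.rnk_dual_add_rnk_ground (X := A ∪ C) (by grind) (hfin.subset (by grind))
  have rank_AD := M.rnk_dual_add_rnk_ground (X := A ∪ D) (by grind) (hfin.subset (by grind))
  have rank_BC := M.rnk_dual_add_rnk_ground (X := B ∪ C) (by grind) (hfin.subset (by grind))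
  have rank_BD := M.rnk_dual_add_rnk_ground (X := B ∪ D) (by grind) (hfin.subset (by grind))
  have rank_CD := M.rnk_dual_add_rnk_ground (X := C ∪ D) (by grind) (hfin.subset (by grind))
  have rank_ACD := M.rnk_dual_add_rnk_ground (X := A ∪ C ∪ D) (by grind) (hfin.subset (by grind))
  have rank_BCD := M.rnk_dual_add_rnk_ground (X := B ∪ C ∪ D) (by grind) (hfin.subset (by grind))
  have card := ncard_ingleton_identity hfin
  unfold IngletonIneq
  omega

theorem IngletonIneq.dual {M : Matroid α} [M.RankFinite] (hE : A ∪ B ∪ C ∪ D ⊆ M.E)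
    (hfin : (A ∪ B ∪ C ∪ D).Finite)
    (h : M.IngletonIneq (M.E \ (A ∪ B ∪ D)) (M.E \ (A ∪ B ∪ C)) (M.E \ (A ∪ C ∪ D))
      (M.E \ (B ∪ C ∪ D))) :
    M✶.IngletonIneq A B C D := by
  rw [ingletonIneq_dual_iff M hE hfin]
  have primal := IngletonIneq.rnk_inter_le (M := M)
    (P := M.E \ A) (Q := M.E \ B) (R := M.E \ C) (S := M.E \ D)
    (by simpa only [Set.sdiff_inter_sdiff] using h)
  simp only [Set.sdiff_inter_sdiff, ← Set.sdiff_inter] at primal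
  have error_AB := M.rnk_sdiff_sdiff_sdiff_le_ncard (X := C ∪ D) (Y := A ∩ B)
    (by grind) (hfin.subset (by grind))
  have error_CD := M.rnk_sdiff_sdiff_sdiff_le_ncard (X := A ∪ B) (Y := C ∩ D)
    (by grind) (hfin.subset (by grind))
  have error_ABD := M.rnk_sdiff_sdiff_sdiff_le_ncard (X := C) (Y := A ∩ B ∩ D)
    (by grind) (hfin.subset (by grind))
  have error_ABC := M.rnk_sdiff_sdiff_sdiff_le_ncard (X := D) (Y := A ∩ B ∩ C)
    (by grind) (hfin.subset (by grind))
  omega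

theorem kinserIneq_four_iff (M : Matroid α) (X : ℕ → Set α) :
    M.KinserIneq 4 X ↔ M.IngletonIneq (X 1) (X 2) (X 3) (X 4) := by
  have Icc_three_four : Finset.Icc 3 4 = ({3, 4} : Finset ℕ) := rfl
  simp only [KinserIneq, IngletonIneq, Icc_three_four, Finset.Icc_self, Finset.sum_singleton,
    Finset.sum_pair (show (3 : ℕ) ≠ 4 by decide), Nat.reduceSub]
  omega

theorem memKinserClass_four_iff (M : Matroid α) :
    M.MemKinserClass 4 ↔
      ∀ A ⊆ M.E, ∀ B ⊆ M.E, ∀ C ⊆ M.E, ∀ D ⊆ M.E, M.IngletonIneq A B C D := by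
  simp only [MemKinserClass, kinserIneq_four_iff]
  constructor
  · intro h A hA B hB C hC D hD
    exact h (fun | 1 => A | 2 => B | 3 => C | _ => D) fun i _ ↦ by split <;> assumption
  · intro h X hX
    exact h _ (hX 1 (by decide)) _ (hX 2 (by decide)) _ (hX 3 (by decide)) _ (hX 4 (by decide))

end Ingleton

end Matroid

/-- `K 4 = K 4✶` : the class of matroids satisfying the 4th Kinser (Ingleton) inequality is
closed under duality. -/
theorem Matroid.dual_memKinserClass_four {α : Type*} (M : Matroid α) [M.Finite]
    (hM : M.MemKinserClass 4) : M✶.MemKinserClass 4 := by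
  rw [memKinserClass_four_iff] at hM ⊢
  intro A hA B hB C hC D hD
  have hE : A ∪ B ∪ C ∪ D ⊆ M.E :=
    Set.union_subset (Set.union_subset (Set.union_subset hA hB) hC) hD
  exact IngletonIneq.dual hE (M.ground_finite.subset hE) <|
    hM _ Set.sdiff_subset _ Set.sdiff_subset _ Set.sdiff_subset _ Set.sdiff_subset
end
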